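/- arXiv:math/0107085 — 2 statements merged into one kernel-verified Lean document; each statement's English description precedes it below -/
import Mathlib

section
/- MC(n) actions on the interval: Let n ≥ 2 and suppose a₁, …, a_n, b₁, …, b_n ∈ Diff²₊(I) and c₁, …, c_{n−1} ∈ Diff²₊(I) satisfy: (1) a_i a_j = a_j a_i, b_i b_j = b_j b_i, c_i c_j = c_j c_i, and a_i c_j = c_j a_i for all valid i, j; (2) a_i b_j = b_j a_i whenever i ≠ j; (3) b_i c_j = c_j b_i whenever j ≠ i and j ≠ i−1; (4) a_i b_i a_i = b_i a_i b_i for all 1 ≤ i ≤ n, and b_i c_j b_i = c_j b_i c_j whenever j = i or j = i−1. Then the subgroup of Diff²₊(I) generated by all the a_i, b_i, c_j is abelian. -/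
/-- A permutation of `ℝ` representing an orientation-preserving C² diffeomorphism of
`I = [0,1]`: it is the identity off `[0,1]`, is C² on `[0,1]`, and has positive
(one-sided, at the endpoints) derivative on `[0,1]`. -/
def IsDiffI (f : Equiv.Perm ℝ) : Prop :=
  (∀ x, x ∉ Set.Icc (0 : ℝ) 1 → f x = x) ∧
  ContDiffOn ℝ 2 f (Set.Icc 0 1) ∧
  ∀ x ∈ Set.Icc (0 : ℝ) 1, 0 < derivWithin f (Set.Icc 0 1) x

/-!
Call two generators adjacent if they satisfy the braid relation. Each adjacent pair commutes with a
third generator, so the braid relation survives division by that generator, and it exhibits the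
quotient of the pair as a commutator of quotients of generators. As adjacency is connected, the
quotients of generators generate a perfect group, which is finitely generated and fixes the points
to the left of `0`.

By Thurston's stability argument such a group is trivial. At a global fixed point `p` the right
derivative is a homomorphism to an abelian group, hence trivial. Then the displacement `g y - y`,
taken modulo `o(M)` where `M` is the largest displacement of a generator, is a homomorphism to an
abelian group as well, so `M = o(M)` and the group fixes a right neighbourhood of `p`. The fixed set
being closed, it is the whole line. Thus all the generators coincide.
-/

open Set Filter Topology Asymptotics
open scoped Pointwise commutatorElement

section StrictDerivWithin

variable {𝕜 F : Type*} [NontriviallyNormedField 𝕜] [NormedAddCommGroup F] [NormedSpace 𝕜 F]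

/-- Strict differentiability within a set: `f y - f z = (y - z) • f' + o(y - z)` as `y` and `z` both
tend to `x` inside `s`. -/
def HasStrictDerivWithinAt (f : 𝕜 → F) (f' : F) (s : Set 𝕜) (x : 𝕜) : Prop :=
  HasDerivAtFilter f f' (𝓝[s] x ×ˢ 𝓝[s] x)

namespace HasStrictDerivWithinAt

theorem mono_nhdsWithin {f : 𝕜 → F} {f' : F} {s t : Set 𝕜} {x : 𝕜}
    (hf : HasStrictDerivWithinAt f f' t x) (hst : 𝓝[s] x ≤ 𝓝[t] x) :
    HasStrictDerivWithinAt f f' s x :=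
  HasDerivAtFilter.mono hf (prod_mono hst hst)

theorem hasDerivWithinAt {f : 𝕜 → F} {f' : F} {s : Set 𝕜} {x : 𝕜}
    (hf : HasStrictDerivWithinAt f f' s x) (hx : x ∈ s) : HasDerivWithinAt f f' s x :=
  HasDerivAtFilter.mono hf (prod_mono le_rfl (pure_le_nhdsWithin hx))

variable {f g : 𝕜 → 𝕜} {f' g' x : 𝕜} {s t : Set 𝕜}

theorem of_eventuallyEq_id (hf : f =ᶠ[𝓝[s] x] id) : HasStrictDerivWithinAt f 1 s x :=
  (hasDerivAtFilter_id _).congr_of_eventuallyEq (hf.prodMap hf)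

theorem comp (hf : HasStrictDerivWithinAt f f' t (g x)) (hg : HasStrictDerivWithinAt g g' s x)
    (hst : Tendsto g (𝓝[s] x) (𝓝[t] (g x))) :
    HasStrictDerivWithinAt (f ∘ g) (f' * g') s x :=
  HasDerivAtFilter.comp hf hg (hst.prodMap hst)

theorem of_rightInverse (hf : HasStrictDerivWithinAt f f' t (g x)) (hf' : f' ≠ 0)
    (hg : Tendsto g (𝓝[s] x) (𝓝[t] (g x))) (hfg : Function.RightInverse g f) :
    HasStrictDerivWithinAt g f'⁻¹ s x := by
  have hinv : Function.LeftInverse (ContinuousLinearMap.toSpanSingleton 𝕜 f'⁻¹)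
      (ContinuousLinearMap.toSpanSingleton 𝕜 f') := fun y ↦ by simp [hf']
  have hcomp : Prod.map (f ∘ g) (f ∘ g) =ᶠ[𝓝[s] x ×ˢ 𝓝[s] x] Prod.map id id := by
    rw [hfg.comp_eq_id]
  exact HasFDerivAtFilter.of_comp_of_leftInverse (hg.prodMap hg) hf
    (hasFDerivAtFilter_id _) hcomp hinv

-- Evaluate the strict derivative of `f` along the pairs `(g y, y)`.
theorem isLittleO_displacement_comp (hf : HasStrictDerivWithinAt f 1 s x)
    (hg : Tendsto g (𝓝[s] x) (𝓝[s] x)) :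
    (fun y ↦ f (g y) - y - ((f y - y) + (g y - y))) =o[𝓝[s] x] fun y ↦ g y - y := by
  refine ((hasDerivAtFilter_iff_isLittleO.1 hf).comp_tendsto (hg.prodMk tendsto_id)).congr_left
    fun y ↦ ?_
  simp only [Function.comp_apply, id, smul_eq_mul, mul_one]
  ring

end HasStrictDerivWithinAt

theorem hasStrictDerivWithinAt_of_hasDerivWithinAt_of_continuousWithinAt {E : Type*}
    [NormedAddCommGroup E] [NormedSpace ℝ E] {f f' : ℝ → E} {s : Set ℝ} {x : ℝ} (hs : Convex ℝ s)
    (hder : ∀ y ∈ s, HasDerivWithinAt f (f' y) s y) (hcont : ContinuousWithinAt f' s x) :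
    HasStrictDerivWithinAt f (f' x) s x := by
  refine hasDerivAtFilter_iff_isLittleO.2 (isLittleO_iff.2 fun ε hε ↦ ?_)
  obtain ⟨δ, hδ, hball⟩ := Metric.continuousWithinAt_iff.1 hcont ε hε
  have hmem : s ∩ Metric.ball x δ ∈ 𝓝[s] x := inter_mem_nhdsWithin s (Metric.ball_mem_nhds x hδ)
  filter_upwards [prod_mem_prod hmem hmem] with q hq
  have hmvt := (hs.inter (convex_ball x δ)).norm_image_sub_le_of_norm_hasDerivWithin_le
    (f := fun y ↦ f y - y • f' x) (C := ε)
    (fun y hy ↦ ((hder y hy.1).mono inter_subset_left).sub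
      ((hasDerivWithinAt_id y _).smul_const (f' x))) (fun y hy ↦ ?_) hq.2 hq.1
  · simpa only [sub_smul, sub_sub_sub_comm] using hmvt
  · simpa only [one_smul, ← dist_eq_norm] using (hball hy.1 hy.2).le

end StrictDerivWithin

section RightDiffeo

theorem continuous_of_strictMono_perm {f : Equiv.Perm ℝ} (hf : StrictMono f) : Continuous f :=
  hf.monotone.continuous_of_surjective f.surjective

theorem strictMono_perm_inv {f : Equiv.Perm ℝ} (hf : StrictMono f) :
    StrictMono (f⁻¹ : Equiv.Perm ℝ) := fun x y hxy ↦ by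
  rw [← hf.lt_iff_lt]
  simpa using hxy

theorem tendsto_nhdsGE_of_strictMono_perm {f : Equiv.Perm ℝ} (hf : StrictMono f) (p : ℝ) :
    Tendsto f (𝓝[≥] p) (𝓝[≥] (f p)) :=
  (continuous_of_strictMono_perm hf).continuousWithinAt.tendsto_nhdsWithin fun _ hy ↦ hf.monotone hy

/-- The group of increasing bijections of the line which at every point have a positive strict right
derivative. The derivatives from the right suffice for the stability theorem, and allow
diffeomorphisms of an interval to be extended by the identity. -/
def rightDiffeo : Subgroup (Equiv.Perm ℝ) where
  carrier := {f | StrictMono f ∧ ∀ p, ∃ l, 0 < l ∧ HasStrictDerivWithinAt f l (Ici p) p}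
  mul_mem' {f g} hf hg := by
    refine ⟨hf.1.comp hg.1, fun p ↦ ?_⟩
    obtain ⟨l, hl, hfl⟩ := hf.2 (g p)
    obtain ⟨m, hm, hgm⟩ := hg.2 p
    exact ⟨l * m, mul_pos hl hm, hfl.comp hgm (tendsto_nhdsGE_of_strictMono_perm hg.1 p)⟩
  one_mem' := ⟨strictMono_id, fun _ ↦ ⟨1, one_pos, .of_eventuallyEq_id .rfl⟩⟩
  inv_mem' {f} hf := by
    refine ⟨strictMono_perm_inv hf.1, fun p ↦ ?_⟩
    obtain ⟨l, hl, hfl⟩ := hf.2 (f⁻¹ p)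
    exact ⟨l⁻¹, inv_pos.2 hl, hfl.of_rightInverse hl.ne'
      (tendsto_nhdsGE_of_strictMono_perm (strictMono_perm_inv hf.1) p) f.apply_symm_apply⟩

theorem tendsto_nhdsGE_of_mem_rightDiffeo {f : Equiv.Perm ℝ} (hf : f ∈ rightDiffeo) {p : ℝ}
    (hp : f p = p) : Tendsto f (𝓝[≥] p) (𝓝[≥] p) := by
  simpa only [hp] using tendsto_nhdsGE_of_strictMono_perm hf.1 p

end RightDiffeo

section ThurstonStability

theorem map_eq_one_of_isPerfect {G A : Type*} [Group G] [Group.IsPerfect G] [CommGroup A]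
    (φ : G →* A) (g : G) : φ g = 1 :=
  Abelianization.commutator_subset_ker φ Group.IsPerfect.mem_commutator

/-- The functions which are `o(M)` along `l`, the subgroup to divide by in order to make leading
terms additive. -/
def littleOAddSubgroup {α E F : Type*} [SeminormedAddCommGroup E] [SeminormedAddCommGroup F]
    (l : Filter α) (M : α → F) : AddSubgroup (α → E) where
  carrier := {u | u =o[l] M}
  add_mem' := IsLittleO.add
  zero_mem' := isLittleO_zero M l
  neg_mem' := IsLittleO.neg_left

variable {G : Type*} [Group G] [Group.IsPerfect G] {ρ : G →* Equiv.Perm ℝ} {p : ℝ}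

-- The right derivative at a global fixed point is a homomorphism into an abelian group.
theorem hasStrictDerivWithinAt_one_of_isPerfect (hρ : ∀ g, ρ g ∈ rightDiffeo)
    (hp : ∀ g, ρ g p = p) (g : G) : HasStrictDerivWithinAt (ρ g) 1 (Ici p) p := by
  choose l hl hder using fun g ↦ (hρ g).2 p
  have hmul (g h : G) : l (g * h) = l g * l h := by
    have hcomp : HasStrictDerivWithinAt (ρ g ∘ ρ h) (l g * l h) (Ici p) p :=
      .comp (by simpa only [hp] using hder g) (hder h)
        (tendsto_nhdsGE_of_strictMono_perm (hρ h).1 p)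
    have hgh : HasStrictDerivWithinAt (ρ g ∘ ρ h) (l (g * h)) (Ici p) p := by
      simpa only [map_mul, Equiv.Perm.coe_mul] using hder (g * h)
    exact (uniqueDiffWithinAt_Ici p).eq_deriv _ (hgh.hasDerivWithinAt self_mem_Ici)
      (hcomp.hasDerivWithinAt self_mem_Ici)
  let derivHom : G →* ℝˣ := .mk' (fun g ↦ .mk0 (l g) (hl g).ne') fun g h ↦ Units.ext (hmul g h)
  have hone : l g = 1 := congrArg Units.val (map_eq_one_of_isPerfect derivHom g)
  simpa only [hone] using hder g

theorem isLittleO_displacement_mul (hρ : ∀ g, ρ g ∈ rightDiffeo) (hp : ∀ g, ρ g p = p) (g h : G) :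
    (fun y ↦ ρ (g * h) y - y - ((ρ g y - y) + (ρ h y - y))) =o[𝓝[≥] p] fun y ↦ ρ h y - y := by
  simpa only [map_mul, Equiv.Perm.coe_mul, Function.comp_apply] using
    (hasStrictDerivWithinAt_one_of_isPerfect hρ hp g).isLittleO_displacement_comp
      (tendsto_nhdsGE_of_mem_rightDiffeo (hρ h) (hp h))

-- Modulo `o(M)` the displacement is a homomorphism into an abelian group.
theorem isLittleO_displacement_of_isPerfect {F : Type*} [SeminormedAddCommGroup F] {M : ℝ → F}
    (hρ : ∀ g, ρ g ∈ rightDiffeo) (hp : ∀ g, ρ g p = p)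
    (hM : ∀ g, (fun y ↦ ρ g y - y) =O[𝓝[≥] p] M) (g : G) :
    (fun y ↦ ρ g y - y) =o[𝓝[≥] p] M := by
  let displacement : G →* Multiplicative ((ℝ → ℝ) ⧸ littleOAddSubgroup (E := ℝ) (𝓝[≥] p) M) :=
    .mk' (fun g ↦ .ofAdd (QuotientAddGroup.mk fun y ↦ ρ g y - y)) fun g h ↦
      congrArg Multiplicative.ofAdd <| QuotientAddGroup.eq_iff_sub_mem.2 <|
        (isLittleO_displacement_mul hρ hp g h).trans_isBigO (hM h)
  exact (QuotientAddGroup.eq_zero_iff _).1 (map_eq_one_of_isPerfect displacement g)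

theorem isBigO_displacement_of_closure_eq_top {S : Set G} [Fintype S]
    (hρ : ∀ g, ρ g ∈ rightDiffeo) (hp : ∀ g, ρ g p = p) (hS : Submonoid.closure S = ⊤) (g : G) :
    (fun y ↦ ρ g y - y) =O[𝓝[≥] p] fun y (t : S) ↦ ρ t y - y := by
  have hg : g ∈ Submonoid.closure S := hS ▸ Submonoid.mem_top g
  induction hg using Submonoid.closure_induction with
  | mem t ht => exact isBigO_pi.1 (isBigO_refl (fun y (t : S) ↦ ρ t y - y) _) ⟨t, ht⟩
  | one => simpa using isBigO_zero _ _
  | mul g h _ _ ihg ihh =>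
    exact (((isLittleO_displacement_mul hρ hp g h).isBigO.trans ihh).add (ihg.add ihh)).congr_left
      fun y ↦ sub_add_cancel _ _

theorem eventually_nhdsGE_forall_apply_eq_of_isPerfect [Group.FG G] (hρ : ∀ g, ρ g ∈ rightDiffeo)
    (hp : ∀ g, ρ g p = p) : ∀ᶠ y in 𝓝[≥] p, ∀ g, ρ g y = y := by
  obtain ⟨S, hS, hfin⟩ := Monoid.fg_iff.1 (Monoid.fg_of_group_fg (G := G))
  have := hfin.fintype
  have hself : (fun y (t : S) ↦ ρ t y - y) =o[𝓝[≥] p] fun y (t : S) ↦ ρ t y - y :=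
    isLittleO_pi.2 fun t ↦ isLittleO_displacement_of_isPerfect hρ hp
      (isBigO_displacement_of_closure_eq_top hρ hp hS) t
  have hzero : ∀ᶠ y in 𝓝[≥] p, (fun t : S ↦ ρ t y - y) = 0 := by
    by_contra hne
    exact isLittleO_irrefl (not_eventually.1 hne) hself
  filter_upwards [hzero] with y hy g
  have hg : g ∈ Submonoid.closure S := hS ▸ Submonoid.mem_top g
  induction hg using Submonoid.closure_induction with
  | mem t ht => exact sub_eq_zero.1 (congrFun hy ⟨t, ht⟩)
  | one => simp
  | mul g h _ _ ihg ihh => rw [map_mul, Equiv.Perm.mul_apply, ihh, ihg]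

theorem eq_one_of_isPerfect_of_frequently_atBot [Group.FG G] (hρ : ∀ g, ρ g ∈ rightDiffeo)
    (hfix : ∃ᶠ y in atBot, ∀ g, ρ g y = y) : ρ = 1 := by
  have hclosed : IsClosed {y | ∀ g, ρ g y = y} := by
    simp only [ofPred_forall]
    exact isClosed_iInter fun g ↦
      isClosed_eq (continuous_of_strictMono_perm (hρ g).1) continuous_id
  ext g x
  obtain ⟨y, hyx, hy⟩ := frequently_atBot.1 hfix x
  refine (hclosed.inter isClosed_Icc).Icc_subset_of_forall_mem_nhdsWithin hy (fun p hp ↦ ?_)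
    (right_mem_Icc.2 hyx) g
  exact nhdsWithin_mono p Ioi_subset_Ici_self
    (eventually_nhdsGE_forall_apply_eq_of_isPerfect hρ hp.1)

end ThurstonStability

section BraidRelations

variable {G : Type*} [Group G] {S : Set G} {x y z : G}

theorem commutatorElement_mul_left_of_braid (h : x * y * x = y * x * y) :
    ⁅x * y, x⁆ = y / x := by
  rw [commutatorElement_def, h, div_eq_mul_inv]
  group

theorem div_braid_div_of_commute (h : x * y * x = y * x * y) (hx : Commute z x)
    (hy : Commute z y) : x / z * (y / z) * (x / z) = y / z * (x / z) * (y / z) := by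
  have hzx : Commute z⁻¹ x := hx.inv_left
  have hzy : Commute z⁻¹ y := hy.inv_left
  simp only [div_eq_mul_inv]
  rw [hzy.mul_mul_mul_comm, hzx.mul_mul_mul_comm, (hzx.mul_left hzx).mul_mul_mul_comm,
    (hzy.mul_left hzy).mul_mul_mul_comm, h]

/-- Two elements of `S` which satisfy the braid relation and both commute with some element of `S`:
the adjacency which makes their quotient a commutator. -/
def BraidStep (S : Set G) (x y : G) : Prop :=
  x ∈ S ∧ y ∈ S ∧ x * y * x = y * x * y ∧ ∃ z ∈ S, Commute z x ∧ Commute z y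

-- `u = x z⁻¹` and `v = y z⁻¹` still satisfy the braid relation, and `y x⁻¹ = v u⁻¹ = ⁅u v, u⁆`.
theorem BraidStep.div_mem_commutator (h : BraidStep S x y) :
    y / x ∈ ⁅Subgroup.closure (S / S), Subgroup.closure (S / S)⁆ := by
  obtain ⟨hx, hy, hxy, z, hz, hzx, hzy⟩ := h
  have hxz : x / z ∈ Subgroup.closure (S / S) := Subgroup.subset_closure (div_mem_div hx hz)
  have hyz : y / z ∈ Subgroup.closure (S / S) := Subgroup.subset_closure (div_mem_div hy hz)
  rw [← div_div_div_cancel_right y x z,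
    ← commutatorElement_mul_left_of_braid (div_braid_div_of_commute hxy hzx hzy)]
  exact Subgroup.commutator_mem_commutator (mul_mem hxz hyz) hxz

theorem isPerfect_closure_div_of_eqvGen_braidStep
    (hS : ∀ x ∈ S, ∀ y ∈ S, Relation.EqvGen (BraidStep S) x y) :
    Group.IsPerfect (Subgroup.closure (S / S)) := by
  have hdiv {x y : G} (h : Relation.EqvGen (BraidStep S) x y) :
      y / x ∈ ⁅Subgroup.closure (S / S), Subgroup.closure (S / S)⁆ := by
    induction h with
    | rel x y h => exact h.div_mem_commutator
    | refl x => simpa only [div_self'] using one_mem _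
    | symm x y _ ih => simpa only [inv_div] using inv_mem ih
    | trans x y z _ _ ihxy ihyz => simpa only [div_mul_div_cancel] using mul_mem ihyz ihxy
  refine Subgroup.isPerfect_iff.2 (Subgroup.commutator_le_self _ |>.antisymm ?_)
  rw [Subgroup.closure_le]
  rintro _ ⟨y, hy, x, hx, rfl⟩
  exact hdiv (hS x hx y hy)

end BraidRelations

theorem subsingleton_of_eqvGen_braidStep {S : Set (Equiv.Perm ℝ)} (hfin : S.Finite)
    (hS : ∀ f ∈ S, f ∈ rightDiffeo) (hfix : ∃ᶠ x in atBot, ∀ f ∈ S, f x = x)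
    (hbraid : ∀ f ∈ S, ∀ g ∈ S, Relation.EqvGen (BraidStep S) f g) : S.Subsingleton := by
  have := isPerfect_closure_div_of_eqvGen_braidStep hbraid
  have := (hfin.div hfin).to_subtype
  let K := Subgroup.closure (S / S)
  have hK : K ≤ rightDiffeo := by
    rw [Subgroup.closure_le]
    rintro _ ⟨f, hf, g, hg, rfl⟩
    exact div_mem (hS f hf) (hS g hg)
  have hfixK : ∃ᶠ x in atBot, ∀ k : K, K.subtype k x = x := hfix.mono fun x hx k ↦ by
    have hstab : K ≤ MulAction.stabilizer (Equiv.Perm ℝ) x := by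
      rw [Subgroup.closure_le]
      rintro _ ⟨f, hf, g, hg, rfl⟩
      exact div_mem (MulAction.mem_stabilizer_iff.2 (hx f hf))
        (MulAction.mem_stabilizer_iff.2 (hx g hg))
    exact hstab k.2
  have htriv : K.subtype = 1 := eq_one_of_isPerfect_of_frequently_atBot (fun k ↦ hK k.2) hfixK
  intro f hf g hg
  exact div_eq_one.1 (DFunLike.congr_fun htriv ⟨f / g, Subgroup.subset_closure (div_mem_div hf hg)⟩)

namespace IsDiffI

variable {f : Equiv.Perm ℝ} {x : ℝ}

theorem image_Icc (hf : IsDiffI f) : f '' Icc 0 1 = Icc 0 1 := by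
  have hcompl : EqOn f id (Icc 0 1)ᶜ := hf.1
  rw [← compl_inj_iff, ← image_compl_eq f.bijective, hcompl.image_eq_self]

theorem strictMonoOn_Icc (hf : IsDiffI f) : StrictMonoOn f (Icc 0 1) :=
  strictMonoOn_of_deriv_pos (convex_Icc 0 1) hf.2.1.continuousOn fun x hx ↦ by
    rw [← derivWithin_of_mem_nhds (mem_interior_iff_mem_nhds.1 hx)]
    exact hf.2.2 x (interior_subset hx)

theorem apply_of_le_zero (hf : IsDiffI f) (hx : x ≤ 0) : f x = x := by
  obtain hx | rfl := hx.lt_or_eq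
  · exact hf.1 x fun h ↦ hx.not_ge h.1
  · have hleast := hf.strictMonoOn_Icc.monotoneOn.map_isLeast (isLeast_Icc zero_le_one)
    exact (hf.image_Icc ▸ hleast).unique (isLeast_Icc zero_le_one)

theorem apply_of_one_le (hf : IsDiffI f) (hx : 1 ≤ x) : f x = x := by
  obtain hx | rfl := hx.lt_or_eq
  · exact hf.1 x fun h ↦ hx.not_ge h.2
  · have hgreatest := hf.strictMonoOn_Icc.monotoneOn.map_isGreatest (isGreatest_Icc zero_le_one)
    exact (hf.image_Icc ▸ hgreatest).unique (isGreatest_Icc zero_le_one)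

theorem strictMono (hf : IsDiffI f) : StrictMono f := by
  have hIic : StrictMonoOn f (Iic 0) :=
    (strictMono_id.strictMonoOn _).congr fun x hx ↦ (hf.apply_of_le_zero hx).symm
  have hIci : StrictMonoOn f (Ici 1) :=
    (strictMono_id.strictMonoOn _).congr fun x hx ↦ (hf.apply_of_one_le hx).symm
  have hIic_one : StrictMonoOn f (Iic 1) := by
    rw [← Iic_union_Icc_eq_Iic zero_le_one]
    exact hIic.union hf.strictMonoOn_Icc isGreatest_Iic (isLeast_Icc zero_le_one)
  exact hIic_one.Iic_union_Ici hIci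

theorem hasStrictDerivWithinAt_Icc (hf : IsDiffI f) (hx : x ∈ Icc 0 1) :
    HasStrictDerivWithinAt f (derivWithin f (Icc 0 1) x) (Icc 0 1) x :=
  hasStrictDerivWithinAt_of_hasDerivWithinAt_of_continuousWithinAt (convex_Icc 0 1)
    (fun y hy ↦ (hf.2.1.differentiableOn two_ne_zero y hy).hasDerivWithinAt)
    (hf.2.1.continuousOn_derivWithin (uniqueDiffOn_Icc one_pos) one_le_two x hx)

theorem mem_rightDiffeo (hf : IsDiffI f) : f ∈ rightDiffeo := by
  refine ⟨hf.strictMono, fun p ↦ ?_⟩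
  obtain hp0 | hp0 := lt_or_ge p 0
  · exact ⟨1, one_pos, .of_eventuallyEq_id <|
      ((eventually_le_nhds hp0).filter_mono nhdsWithin_le_nhds).mono fun _ ↦ hf.apply_of_le_zero⟩
  obtain hp1 | hp1 := lt_or_ge p 1
  · exact ⟨_, hf.2.2 p ⟨hp0, hp1.le⟩, (hf.hasStrictDerivWithinAt_Icc ⟨hp0, hp1.le⟩).mono_nhdsWithin
      (nhdsWithin_le_of_mem (Icc_mem_nhdsGE_of_mem ⟨hp0, hp1⟩))⟩
  · exact ⟨1, one_pos, .of_eventuallyEq_id <|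
      eventually_mem_nhdsWithin.mono fun _ hy ↦ hf.apply_of_one_le (hp1.trans hy)⟩

end IsDiffI

section MCN

/-- The generators `a 1, …, a n, b 1, …, b n, c 1, …, c (n - 1)` of an action of a group of type
`MC(n)`. -/
def mcnGenerators {G : Type*} (n : ℕ) (a b c : ℕ → G) : Set G :=
  {x | ∃ i, 1 ≤ i ∧ i ≤ n ∧ (x = a i ∨ x = b i)} ∪ {x | ∃ j, 1 ≤ j ∧ j ≤ n - 1 ∧ x = c j}

variable {G : Type*} {n : ℕ} {a b c : ℕ → G}

theorem forall_mem_mcnGenerators {P : G → Prop} (ha : ∀ i, 1 ≤ i → i ≤ n → P (a i))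
    (hb : ∀ i, 1 ≤ i → i ≤ n → P (b i)) (hc : ∀ j, 1 ≤ j → j ≤ n - 1 → P (c j)) :
    ∀ x ∈ mcnGenerators n a b c, P x := by
  rintro _ (⟨i, hi, hin, rfl | rfl⟩ | ⟨j, hj, hjn, rfl⟩)
  exacts [ha i hi hin, hb i hi hin, hc j hj hjn]

theorem finite_mcnGenerators : (mcnGenerators n a b c).Finite :=
  ((((finite_Icc 1 n).image a).union ((finite_Icc 1 n).image b)).union
      ((finite_Icc 1 (n - 1)).image c)).subset <|
    forall_mem_mcnGenerators (fun i hi hin ↦ .inl (.inl ⟨i, ⟨hi, hin⟩, rfl⟩))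
      (fun i hi hin ↦ .inl (.inr ⟨i, ⟨hi, hin⟩, rfl⟩)) (fun j hj hjn ↦ .inr ⟨j, ⟨hj, hjn⟩, rfl⟩)

theorem eqvGen_mcnGenerators {r : G → G → Prop} (hab : ∀ i, 1 ≤ i → i ≤ n → r (a i) (b i))
    (hbc : ∀ i j, 1 ≤ i → i ≤ n → 1 ≤ j → j ≤ n - 1 → (j = i ∨ j = i - 1) → r (b i) (c j)) :
    ∀ x ∈ mcnGenerators n a b c, ∀ y ∈ mcnGenerators n a b c, Relation.EqvGen r x y := by
  have hbc_self {j : ℕ} (hj : 1 ≤ j) (hjn : j ≤ n - 1) : Relation.EqvGen r (b j) (c j) :=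
    .rel _ _ (hbc j j hj (by omega) hj hjn (.inl rfl))
  have hbc_succ {j : ℕ} (hj : 1 ≤ j) (hjn : j ≤ n - 1) : Relation.EqvGen r (b (j + 1)) (c j) :=
    .rel _ _ (hbc (j + 1) j (by omega) (by omega) hj hjn (.inr rfl))
  have hbb {i : ℕ} (hi : 1 ≤ i) (hin : i ≤ n) : Relation.EqvGen r (b 1) (b i) := by
    induction i, hi using Nat.le_induction with
    | base => exact .refl _
    | succ j hj ih =>
      have hjn : j ≤ n - 1 := by omega
      exact .trans _ _ _ (ih (by omega))
        (.trans _ _ _ (hbc_self hj hjn) (.symm _ _ (hbc_succ hj hjn)))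
  have hconn : ∀ x ∈ mcnGenerators n a b c, Relation.EqvGen r (b 1) x :=
    forall_mem_mcnGenerators
      (fun i hi hin ↦ .trans _ _ _ (hbb hi hin) (.symm _ _ (.rel _ _ (hab i hi hin))))
      (fun i hi hin ↦ hbb hi hin)
      (fun j hj hjn ↦ .trans _ _ _ (hbb hj (by omega)) (hbc_self hj hjn))
  exact fun x hx y hy ↦ .trans _ _ _ (.symm _ _ (hconn x hx)) (hconn y hy)

-- For `k ≠ i` the generator `a k` commutes with `a i`, with `b i` and with every `c j`.
theorem eqvGen_braidStep_mcnGenerators [Group G] (hn : 2 ≤ n)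
    (haa : ∀ i j, 1 ≤ i → i ≤ n → 1 ≤ j → j ≤ n → a i * a j = a j * a i)
    (hac : ∀ i j, 1 ≤ i → i ≤ n → 1 ≤ j → j ≤ n - 1 → a i * c j = c j * a i)
    (hab : ∀ i j, 1 ≤ i → i ≤ n → 1 ≤ j → j ≤ n → i ≠ j → a i * b j = b j * a i)
    (haba : ∀ i, 1 ≤ i → i ≤ n → a i * b i * a i = b i * a i * b i)
    (hbcb : ∀ i j, 1 ≤ i → i ≤ n → 1 ≤ j → j ≤ n - 1 → (j = i ∨ j = i - 1) →
      b i * c j * b i = c j * b i * c j) :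
    ∀ x ∈ mcnGenerators n a b c, ∀ y ∈ mcnGenerators n a b c,
      Relation.EqvGen (BraidStep (mcnGenerators n a b c)) x y := by
  have hk (i : ℕ) : ∃ k, 1 ≤ k ∧ k ≤ n ∧ k ≠ i := by
    obtain rfl | hi := eq_or_ne i 1
    exacts [⟨2, one_le_two, hn, by decide⟩, ⟨1, le_rfl, one_le_two.trans hn, hi.symm⟩]
  refine eqvGen_mcnGenerators (fun i hi hin ↦ ?_) fun i j hi hin hj hjn hij ↦ ?_
  · obtain ⟨k, hk, hkn, hki⟩ := hk i
    exact ⟨.inl ⟨i, hi, hin, .inl rfl⟩, .inl ⟨i, hi, hin, .inr rfl⟩, haba i hi hin, a k,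
      .inl ⟨k, hk, hkn, .inl rfl⟩, haa k i hk hkn hi hin, hab k i hk hkn hi hin hki⟩
  · obtain ⟨k, hk, hkn, hki⟩ := hk i
    exact ⟨.inl ⟨i, hi, hin, .inr rfl⟩, .inr ⟨j, hj, hjn, rfl⟩, hbcb i j hi hin hj hjn hij, a k,
      .inl ⟨k, hk, hkn, .inl rfl⟩, hab k i hk hkn hi hin hki, hac k j hk hkn hj hjn⟩

end MCN

theorem commute_of_mem_closure_of_subsingleton {G : Type*} [Group G] {S : Set G}
    (hS : S.Subsingleton) : ∀ u ∈ Subgroup.closure S, ∀ v ∈ Subgroup.closure S, Commute u v := by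
  have := Subgroup.isMulCommutative_closure fun x hx y hy ↦ by rw [hS hx hy]
  exact fun u hu v hv ↦ setLike_mul_comm hu hv

theorem mcn_actions_on_interval_general (n : ℕ) (hn : 2 ≤ n) (a b c : ℕ → Equiv.Perm ℝ)
    (hreg : ∀ f ∈ mcnGenerators n a b c, f ∈ rightDiffeo)
    (hfix : ∃ᶠ x in atBot, ∀ f ∈ mcnGenerators n a b c, f x = x)
    (haa : ∀ i j, 1 ≤ i → i ≤ n → 1 ≤ j → j ≤ n → a i * a j = a j * a i)
    (hac : ∀ i j, 1 ≤ i → i ≤ n → 1 ≤ j → j ≤ n - 1 → a i * c j = c j * a i)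
    (hab : ∀ i j, 1 ≤ i → i ≤ n → 1 ≤ j → j ≤ n → i ≠ j → a i * b j = b j * a i)
    (haba : ∀ i, 1 ≤ i → i ≤ n → a i * b i * a i = b i * a i * b i)
    (hbcb : ∀ i j, 1 ≤ i → i ≤ n → 1 ≤ j → j ≤ n - 1 → (j = i ∨ j = i - 1) →
      b i * c j * b i = c j * b i * c j) :
    (mcnGenerators n a b c).Subsingleton :=
  subsingleton_of_eqvGen_braidStep finite_mcnGenerators hreg hfix
    (eqvGen_braidStep_mcnGenerators hn haa hac hab haba hbcb)

/-- **MC(n) actions on the interval.** Let `n ≥ 2` and let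
`a 1, …, a n, b 1, …, b n, c 1, …, c (n-1)` be orientation-preserving C²
diffeomorphisms of `I = [0,1]` satisfying the `MC(n)` relations:
(1) the `a`'s commute with each other, the `b`'s with each other, the `c`'s with each
other, and the `a`'s with the `c`'s; (2) `a i` commutes with `b j` for `i ≠ j`;
(3) `b i` commutes with `c j` for `j ≠ i, i − 1`; (4) `a i * b i * a i = b i * a i * b i`
and `b i * c j * b i = c j * b i * c j` for `j = i, i − 1`.
Then the group generated by all of them is abelian. -/
theorem mcn_actions_on_interval (n : ℕ) (hn : 2 ≤ n)
    (a b c : ℕ → Equiv.Perm ℝ)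
    (ha : ∀ i, 1 ≤ i → i ≤ n → IsDiffI (a i))
    (hb : ∀ i, 1 ≤ i → i ≤ n → IsDiffI (b i))
    (hc : ∀ j, 1 ≤ j → j ≤ n - 1 → IsDiffI (c j))
    (haa : ∀ i j, 1 ≤ i → i ≤ n → 1 ≤ j → j ≤ n → a i * a j = a j * a i)
    (hbb : ∀ i j, 1 ≤ i → i ≤ n → 1 ≤ j → j ≤ n → b i * b j = b j * b i)
    (hcc : ∀ i j, 1 ≤ i → i ≤ n - 1 → 1 ≤ j → j ≤ n - 1 → c i * c j = c j * c i)
    (hac : ∀ i j, 1 ≤ i → i ≤ n → 1 ≤ j → j ≤ n - 1 → a i * c j = c j * a i)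
    (hab : ∀ i j, 1 ≤ i → i ≤ n → 1 ≤ j → j ≤ n → i ≠ j → a i * b j = b j * a i)
    (hbc : ∀ i j, 1 ≤ i → i ≤ n → 1 ≤ j → j ≤ n - 1 → j ≠ i → j ≠ i - 1 →
      b i * c j = c j * b i)
    (haba : ∀ i, 1 ≤ i → i ≤ n → a i * b i * a i = b i * a i * b i)
    (hbcb : ∀ i j, 1 ≤ i → i ≤ n → 1 ≤ j → j ≤ n - 1 → (j = i ∨ j = i - 1) →
      b i * c j * b i = c j * b i * c j) :
    ∀ u ∈ Subgroup.closure
        ({x | ∃ i, 1 ≤ i ∧ i ≤ n ∧ (x = a i ∨ x = b i)} ∪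
         {x | ∃ j, 1 ≤ j ∧ j ≤ n - 1 ∧ x = c j}),
      ∀ v ∈ Subgroup.closure
        ({x | ∃ i, 1 ≤ i ∧ i ≤ n ∧ (x = a i ∨ x = b i)} ∪
         {x | ∃ j, 1 ≤ j ∧ j ≤ n - 1 ∧ x = c j}),
      Commute u v := by
  have hdiff : ∀ f ∈ mcnGenerators n a b c, IsDiffI f := forall_mem_mcnGenerators ha hb hc
  have hfix : ∃ᶠ x in atBot, ∀ f ∈ mcnGenerators n a b c, f x = x :=
    ((eventually_le_atBot 0).mono fun _ hx f hf ↦ (hdiff f hf).apply_of_le_zero hx).frequently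
  exact commute_of_mem_closure_of_subsingleton <| mcn_actions_on_interval_general n hn a b c
    (fun f hf ↦ (hdiff f hf).mem_rightDiffeo) hfix haa hac hab haba hbcb
end

section
/- For n ≥ 6, any group homomorphism from Aut(F_n), the automorphism group of the free group on n generators, to Diff²₊(I) is trivial: every automorphism of F_n is sent to the identity diffeomorphism of [0,1]. -/
/-!
For every finite `α` the group `Aut (F_α)` is generated by its elements of finite order, and a
monotone permutation of finite order of a linear order is the identity; hence every
order-preserving action of `Aut (F_α)` on a linear order is trivial.

Generation by torsion is Nielsen reduction. An elementary transvection `l ↦ l m` is a product of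
two involutions. Given an automorphism, precompose it with such transvections so as to minimize the
total norm of the images of the generators, breaking ties by a numerical code of the initial and
terminal halves of these images. At a minimum, some of the middle factor of the image of every
reduced three-letter word survives cancellation, so the automorphism does not decrease norms; its
inverse then maps generators into the finite unit ball and therefore has finite order.
-/

namespace NielsenReduction

open FreeGroup hiding map_mul map_inv map_one

section CommonPrefix

variable {β : Type*} [DecidableEq β]

/-- Length of the longest common prefix of two lists. -/
def commonPrefixLength : List β → List β → ℕ
  | a :: l, b :: m => if a = b then commonPrefixLength l m + 1 else 0
  | _, _ => 0

theorem commonPrefixLength_comm (l m : List β) :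
    commonPrefixLength l m = commonPrefixLength m l := by
  induction l generalizing m <;> cases m <;> grind [commonPrefixLength]

theorem commonPrefixLength_self (l : List β) : commonPrefixLength l l = l.length := by
  induction l <;> simp_all [commonPrefixLength]

theorem take_commonPrefixLength (l m : List β) :
    l.take (commonPrefixLength l m) = m.take (commonPrefixLength l m) := by
  fun_induction commonPrefixLength l m <;> simp_all

theorem commonPrefixLength_le_length_left (l m : List β) :
    commonPrefixLength l m ≤ l.length := by
  fun_induction commonPrefixLength l m <;> grind

theorem min_commonPrefixLength_le (k l m : List β) :
    min (commonPrefixLength k l) (commonPrefixLength l m) ≤ commonPrefixLength k m := by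
  induction k generalizing l m <;> cases l <;> cases m <;> grind [commonPrefixLength]

end CommonPrefix

section GromovProduct

variable {α : Type*}

theorem isReduced_invRev {L : List (α × Bool)} (hL : IsReduced L) : IsReduced (invRev L) := by
  classical
  rw [isReduced_iff_reduce_eq, reduce_invRev, hL.reduce_eq]

theorem isReduced_invRev_cons_append_cons {a b : α × Bool} {L M : List (α × Bool)}
    (hL : IsReduced (a :: L)) (hM : IsReduced (b :: M)) (hab : a ≠ b) :
    IsReduced (invRev (a :: L) ++ b :: M) := by
  have hjoin : IsReduced (invRev [a] ++ b :: M) :=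
    isReduced_cons_cons.2 ⟨by grind, hM⟩
  have hL' := isReduced_invRev hL
  rw [invRev_cons] at hL' ⊢
  exact hL'.append_overlap hjoin (by simp [invRev])

variable [DecidableEq α]

theorem reduce_invRev_append {L M : List (α × Bool)} (hL : IsReduced L) (hM : IsReduced M) :
    reduce (invRev L ++ M) =
      invRev (L.drop (commonPrefixLength L M)) ++ M.drop (commonPrefixLength L M) := by
  fun_induction commonPrefixLength L M with
  | case1 L a M ih =>
    have hcancel : reduce (invRev (a :: L) ++ a :: M) = reduce (invRev L ++ M) := by
      apply reduce.sound
      rw [← List.singleton_append, ← List.singleton_append (l := M)]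
      simp only [← mul_mk, ← inv_mk]
      group
    rw [hcancel, ih (hL.infix (List.suffix_cons a L).isInfix)
      (hM.infix (List.suffix_cons a M).isInfix), List.drop_succ_cons, List.drop_succ_cons]
  | case2 a L b M hab => exact (isReduced_invRev_cons_append_cons hL hM hab).reduce_eq
  | case3 L M hLM =>
    rcases L with _ | ⟨a, L⟩
    · exact hM.reduce_eq
    · rcases M with _ | ⟨b, M⟩
      · simpa using (isReduced_invRev hL).reduce_eq
      · exact (hLM a L b M rfl rfl).elim

/-- The Gromov product `(g | h)` based at `1` in the Cayley tree: the number of letters that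
cancel from each factor of `g⁻¹ * h`. -/
def gromovProduct (g h : FreeGroup α) : ℕ := commonPrefixLength g.toWord h.toWord

theorem gromovProduct_comm (g h : FreeGroup α) : gromovProduct g h = gromovProduct h g :=
  commonPrefixLength_comm _ _

theorem gromovProduct_self (g : FreeGroup α) : gromovProduct g g = g.norm :=
  commonPrefixLength_self _

theorem gromovProduct_le_norm_left (g h : FreeGroup α) : gromovProduct g h ≤ g.norm :=
  commonPrefixLength_le_length_left _ _

theorem gromovProduct_le_norm_right (g h : FreeGroup α) : gromovProduct g h ≤ h.norm :=
  gromovProduct_comm g h ▸ gromovProduct_le_norm_left h g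

theorem min_gromovProduct_le (g h k : FreeGroup α) :
    min (gromovProduct g h) (gromovProduct h k) ≤ gromovProduct g k :=
  min_commonPrefixLength_le _ _ _

theorem gromovProduct_eq_of_lt {g h k : FreeGroup α}
    (hlt : gromovProduct g h < gromovProduct k h) : gromovProduct g k = gromovProduct g h := by
  have hgk := min_gromovProduct_le g h k
  have hgh := min_gromovProduct_le g k h
  rw [gromovProduct_comm h k] at hgk
  lia

theorem toWord_inv_mul (g h : FreeGroup α) :
    (g⁻¹ * h).toWord =
      invRev (g.toWord.drop (gromovProduct g h)) ++ h.toWord.drop (gromovProduct g h) := by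
  rw [toWord_mul, toWord_inv, reduce_invRev_append isReduced_toWord isReduced_toWord,
    gromovProduct]

theorem norm_inv_mul_add_two_mul_gromovProduct (g h : FreeGroup α) :
    (g⁻¹ * h).norm + 2 * gromovProduct g h = g.norm + h.norm := by
  have hg := gromovProduct_le_norm_left g h
  have hh := gromovProduct_le_norm_right g h
  rw [FreeGroup.norm, toWord_inv_mul]
  simp only [List.length_append, invRev_length, List.length_drop, FreeGroup.norm] at hg hh ⊢
  lia

theorem norm_mul_add_two_mul_gromovProduct (g h : FreeGroup α) :
    (g * h).norm + 2 * gromovProduct g⁻¹ h = g.norm + h.norm := by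
  simpa using norm_inv_mul_add_two_mul_gromovProduct g⁻¹ h

theorem gromovProduct_mul_self_add (g h : FreeGroup α) :
    gromovProduct (g * h) g + gromovProduct g⁻¹ h = g.norm := by
  have hgh := norm_mul_add_two_mul_gromovProduct g h
  have hg := norm_inv_mul_add_two_mul_gromovProduct (g * h) g
  have hnorm : ((g * h)⁻¹ * g).norm = h.norm := by simp [mul_assoc]
  lia

theorem norm_lt_norm_sq {g : FreeGroup α} (hg : g ≠ 1) : g.norm < (g ^ 2).norm := by
  open reduceCyclically in
  have hconj := conj_conjugator_reduceCyclically g.toWord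
  have hcore : reduceCyclically g.toWord ≠ [] := fun hnil ↦ hg <| by
    rw [← mk_toWord (x := g), ← hconj, hnil, List.append_nil, ← mul_mk, ← inv_mk, mul_inv_cancel]
  have hlength := congrArg List.length hconj
  rw [FreeGroup.norm, FreeGroup.norm, toWord_pow, reduce_flatten_replicate_succ isReduced_toWord]
  have hpos := List.length_pos_of_ne_nil hcore
  simp only [List.length_append, invRev_length, List.length_flatten, List.map_replicate,
    List.sum_replicate, smul_eq_mul] at hlength ⊢
  lia

theorem two_mul_gromovProduct_inv_self_lt {g : FreeGroup α} (hg : g ≠ 1) :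
    2 * gromovProduct g⁻¹ g < g.norm := by
  have hsq := norm_mul_add_two_mul_gromovProduct g g
  have hlt := norm_lt_norm_sq hg
  rw [sq] at hlt
  lia

end GromovProduct

section NormEstimate

variable {ι α : Type*} [DecidableEq α]

/-- The Nielsen condition (N2) on the images of the generators: in the image of a reduced word
`l m m'` of three letters, the parts of the middle factor that cancel to the left and to the right
do not exhaust it. -/
def HasUncancelledMiddles (f : FreeGroup ι →* FreeGroup α) : Prop :=
  ∀ l m m' : ι × Bool, IsReduced [l, m, m'] →
    gromovProduct (f (mk [l]))⁻¹ (f (mk [m])) + gromovProduct (f (mk [m]))⁻¹ (f (mk [m'])) <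
      (f (mk [m])).norm

theorem map_mk_cons {G : Type*} [Group G] (f : FreeGroup ι →* G) (l : ι × Bool)
    (L : List (ι × Bool)) : f (mk (l :: L)) = f (mk [l]) * f (mk L) := by
  rw [← map_mul, mul_mk, List.singleton_append]

namespace HasUncancelledMiddles

variable {f : FreeGroup ι →* FreeGroup α} (hf : HasUncancelledMiddles f)
include hf

theorem gromovProduct_inv_lt (L : List (ι × Bool)) {k l : ι × Bool}
    (h : IsReduced (k :: l :: L)) :
    gromovProduct (f (mk [k]))⁻¹ (f (mk [l])) <
      gromovProduct (f (mk (l :: L))) (f (mk [l])) := by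
  induction L generalizing k l with
  | nil =>
    have hkll : IsReduced [k, l, l] := by grind [isReduced_cons_cons, IsReduced.singleton]
    rw [gromovProduct_self]
    exact (Nat.le_add_right _ _).trans_lt (hf k l l hkll)
  | cons m L ih =>
    have hklm : IsReduced [k, l, m] := h.infix ⟨[], L, rfl⟩
    have hcancel := gromovProduct_eq_of_lt (ih (h.infix (List.suffix_cons k _).isInfix))
    have hsum := gromovProduct_mul_self_add (f (mk [l])) (f (mk (m :: L)))
    have hgap := hf k l m hklm
    rw [map_mk_cons f l (m :: L)]
    lia

theorem length_add_gromovProduct_le (L : List (ι × Bool)) {l : ι × Bool}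
    (h : IsReduced (l :: L)) :
    L.length + gromovProduct (f (mk (l :: L))) (f (mk [l])) ≤ (f (mk (l :: L))).norm := by
  induction L generalizing l with
  | nil => simpa using gromovProduct_le_norm_left (f (mk [l])) (f (mk [l]))
  | cons m L ih =>
    have ihL := ih (h.infix (List.suffix_cons l _).isInfix)
    have hlt := hf.gromovProduct_inv_lt L h
    have hcancel := gromovProduct_eq_of_lt hlt
    have hsum := gromovProduct_mul_self_add (f (mk [l])) (f (mk (m :: L)))
    have hnorm := norm_mul_add_two_mul_gromovProduct (f (mk [l])) (f (mk (m :: L)))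
    rw [map_mk_cons f l (m :: L), List.length_cons]
    lia

theorem norm_le_norm_map [DecidableEq ι] (w : FreeGroup ι) : w.norm ≤ (f w).norm := by
  rw [FreeGroup.norm, ← mk_toWord (x := w), toWord_mk, reduce_toWord]
  match hw : w.toWord with
  | [] => simp
  | l :: L =>
    have hred : IsReduced (l :: L) := hw ▸ isReduced_toWord
    have hll : IsReduced (l :: l :: L) := isReduced_cons_cons.2 ⟨fun _ ↦ rfl, hred⟩
    have hlt := hf.gromovProduct_inv_lt L hll
    have hle := hf.length_add_gromovProduct_le L hred
    rw [List.length_cons]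
    lia

end HasUncancelledMiddles

end NormEstimate

section Weight

/-- The number whose digits in base `Nat.card β + 2` encode the letters of a word, least
significant digit first. The summand `2` keeps the base above `1` for every `β`. -/
noncomputable def wordCode {β : Type*} [Finite β] (l : List β) : ℕ :=
  Nat.ofDigits (Nat.card β + 2) (l.map fun x ↦ (Finite.equivFin β x : ℕ))

theorem wordCode_append {β : Type*} [Finite β] (l m : List β) :
    wordCode (l ++ m) = wordCode l + (Nat.card β + 2) ^ l.length * wordCode m := by
  simp [wordCode, Nat.ofDigits_append]

theorem eq_of_wordCode_eq {β : Type*} [Finite β] {l m : List β} (hlength : l.length = m.length)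
    (hcode : wordCode l = wordCode m) : l = m := by
  have hdigit : ∀ l : List β, ∀ d ∈ l.map (fun x ↦ (Finite.equivFin β x : ℕ)),
      d < Nat.card β + 2 := by
    simp only [List.mem_map, forall_exists_index, and_imp]
    rintro l d x - rfl
    lia
  have hinj : Function.Injective fun x ↦ (Finite.equivFin β x : ℕ) :=
    Fin.val_injective.comp (Finite.equivFin β).injective
  exact hinj.list_map <|
    Nat.ofDigits_inj_of_len_eq (by lia) (by simpa using hlength) (hdigit l) (hdigit m) hcode

variable {α : Type*} [DecidableEq α]

/-- The initial half of the reduced word of `g`, including the middle letter if there is one. -/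
def initialHalf (g : FreeGroup α) : List (α × Bool) := g.toWord.take ((g.norm + 1) / 2)

theorem length_initialHalf (g : FreeGroup α) : (initialHalf g).length = (g.norm + 1) / 2 := by
  simp only [initialHalf, List.length_take, FreeGroup.norm]
  lia

theorem initialHalf_eq_take {g : FreeGroup α} {c : ℕ} (hg : g.norm = 2 * c) :
    initialHalf g = g.toWord.take c := by
  rw [initialHalf]
  congr 1
  lia

theorem invRev_initialHalf_inv {g : FreeGroup α} {c : ℕ} (hg : g.norm = 2 * c) :
    invRev (initialHalf g⁻¹) = g.toWord.drop c := by
  have hlength : g.toWord.length - c = c := by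
    rw [FreeGroup.norm] at hg
    lia
  rw [initialHalf_eq_take (norm_inv_eq.trans hg), toWord_inv]
  simp [invRev, List.take_reverse, List.map_drop, hlength, Function.comp_def]

theorem initialHalf_inv_of_toWord_eq_append {g : FreeGroup α} {a s : List (α × Bool)}
    (hg : g.toWord = a ++ s) (has : a.length ≤ s.length) :
    initialHalf g⁻¹ = (invRev s).take ((a.length + s.length + 1) / 2) := by
  rw [initialHalf, norm_inv_eq, FreeGroup.norm, toWord_inv, hg, invRev_append, List.length_append,
    List.take_append_of_le_length (by rw [invRev_length]; lia)]

variable [Finite α]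

/-- The code of the initial half of `g`, used to compare elements of equal norm. -/
noncomputable def halfCode (g : FreeGroup α) : ℕ := wordCode (initialHalf g)

theorem eq_one_of_halfCode_inv_eq {g : FreeGroup α} (hg : Even g.norm)
    (hcode : halfCode g⁻¹ = halfCode g) : g = 1 := by
  have hhalf : initialHalf g⁻¹ = initialHalf g :=
    eq_of_wordCode_eq (by simp [length_initialHalf]) hcode
  obtain ⟨c, hc⟩ := hg.exists_two_nsmul
  rw [← mk_toWord (x := g), ← List.take_append_drop c g.toWord, ← invRev_initialHalf_inv hc,
    ← initialHalf_eq_take hc, hhalf, ← mul_mk, ← inv_mk, mul_inv_cancel]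

/-- The quantity minimized by Nielsen reduction: the norm, with ties broken by the codes of the
initial halves of `g` and `g⁻¹`. -/
noncomputable def nielsenWeight (g : FreeGroup α) : ℕ ×ₗ ℕ :=
  toLex (g.norm, halfCode g + halfCode g⁻¹)

theorem nielsenWeight_inv (g : FreeGroup α) : nielsenWeight g⁻¹ = nielsenWeight g := by
  simp [nielsenWeight, add_comm]

theorem norm_le_of_nielsenWeight_le {g h : FreeGroup α} (hgh : nielsenWeight g ≤ nielsenWeight h) :
    g.norm ≤ h.norm :=
  Prod.Lex.monotone_fst _ _ hgh

theorem halfCode_eq_of_toWord_eq_append {g : FreeGroup α} {a s : List (α × Bool)}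
    (hg : g.toWord = a ++ s) (has : a.length ≤ s.length) :
    halfCode g = wordCode a + (Nat.card (α × Bool) + 2) ^ a.length *
      wordCode (s.take ((a.length + s.length + 1) / 2 - a.length)) := by
  rw [halfCode, initialHalf, FreeGroup.norm, hg, List.length_append, List.take_append,
    List.take_of_length_le (by lia), wordCode_append]

/-- Left multiplication by `y⁻¹`, when it cancels exactly half of `y`, replaces the initial half of
`y` inside `w` by the initial half of `y⁻¹`. -/
theorem halfCode_le_halfCode_inv {y w : FreeGroup α} (hy : y.norm = 2 * gromovProduct y w)
    (hyw : y.norm ≤ w.norm) (h : nielsenWeight w ≤ nielsenWeight (y⁻¹ * w)) :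
    halfCode y ≤ halfCode y⁻¹ := by
  set s := w.toWord.drop (gromovProduct y w)
  have hlength : (initialHalf y⁻¹).length = (initialHalf y).length := by
    simp [length_initialHalf]
  have hs : (initialHalf y).length ≤ s.length := by
    have : s.length = w.norm - gromovProduct y w := List.length_drop
    rw [length_initialHalf]
    lia
  have hw : w.toWord = initialHalf y ++ s := by
    rw [initialHalf_eq_take hy, gromovProduct, take_commonPrefixLength, ← gromovProduct,
      List.take_append_drop]
  have hmul : (y⁻¹ * w).toWord = initialHalf y⁻¹ ++ s := by
    rw [toWord_inv_mul, ← invRev_initialHalf_inv hy, invRev_invRev]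
  have hnorm : (y⁻¹ * w).norm = w.norm := by
    have := norm_inv_mul_add_two_mul_gromovProduct y w
    lia
  rw [nielsenWeight, nielsenWeight, hnorm, Prod.Lex.toLex_le_toLex] at h
  have hcode := (h.resolve_left (lt_irrefl _)).2
  rw [halfCode_eq_of_toWord_eq_append hw hs, halfCode_eq_of_toWord_eq_append hmul (hlength ▸ hs),
    halfCode, halfCode, initialHalf_inv_of_toWord_eq_append hw hs,
    initialHalf_inv_of_toWord_eq_append hmul (hlength ▸ hs), hlength] at hcode
  simpa [halfCode] using hcode

end Weight

section Minimal

variable {ι α : Type*} [DecidableEq α]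

theorem mk_singleton_ne_one (l : ι × Bool) : (mk [l] : FreeGroup ι) ≠ 1 := by
  classical
  simp [← toWord_eq_nil_iff]

theorem two_mul_gromovProduct_lt_of_fst_eq {f : FreeGroup ι →* FreeGroup α}
    (hf : Function.Injective f) {l m : ι × Bool} (hlm : IsReduced [l, m]) (hfst : l.1 = m.1) :
    2 * gromovProduct (f (mk [l]))⁻¹ (f (mk [m])) < min (f (mk [l])).norm (f (mk [m])).norm := by
  obtain rfl : l = m := Prod.ext hfst ((isReduced_cons_cons.1 hlm).1 hfst)
  rw [min_self]
  exact two_mul_gromovProduct_inv_self_lt ((map_ne_one_iff f hf).2 (mk_singleton_ne_one l))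

variable [Finite α]

/-- No elementary transvection `l ↦ l m` of the source decreases the weight of the image of the
generator underlying `l`. -/
def IsNielsenMinimal (f : FreeGroup ι →* FreeGroup α) : Prop :=
  ∀ l m : ι × Bool, l.1 ≠ m.1 →
    nielsenWeight (f (mk [l])) ≤ nielsenWeight (f (mk [l]) * f (mk [m]))

namespace IsNielsenMinimal

variable {f : FreeGroup ι →* FreeGroup α} (hf : IsNielsenMinimal f)
include hf

theorem nielsenWeight_right_le {l m : ι × Bool} (hlm : l.1 ≠ m.1) :
    nielsenWeight (f (mk [m])) ≤ nielsenWeight (f (mk [l]) * f (mk [m])) := by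
  have hinv (k : ι × Bool) : f (mk [(k.1, !k.2)]) = (f (mk [k]))⁻¹ := by
    rw [← map_inv, inv_mk]
    rfl
  have h := hf (m.1, !m.2) (l.1, !l.2) hlm.symm
  rwa [hinv, hinv, ← mul_inv_rev, nielsenWeight_inv, nielsenWeight_inv] at h

theorem two_mul_gromovProduct_le {l m : ι × Bool} (hlm : l.1 ≠ m.1) :
    2 * gromovProduct (f (mk [l]))⁻¹ (f (mk [m])) ≤ min (f (mk [l])).norm (f (mk [m])).norm := by
  have hnorm := norm_mul_add_two_mul_gromovProduct (f (mk [l])) (f (mk [m]))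
  have hl := norm_le_of_nielsenWeight_le (hf l m hlm)
  have hm := norm_le_of_nielsenWeight_le (hf.nielsenWeight_right_le hlm)
  lia

theorem halfCode_le_halfCode_inv_left {l m : ι × Bool} (hlm : l.1 ≠ m.1)
    (hhalf : (f (mk [m])).norm = 2 * gromovProduct (f (mk [l]))⁻¹ (f (mk [m]))) :
    halfCode (f (mk [m])) ≤ halfCode (f (mk [m]))⁻¹ := by
  have hle := hf.two_mul_gromovProduct_le hlm
  have hweight := hf l m hlm
  rw [← nielsenWeight_inv, ← nielsenWeight_inv (_ * _), mul_inv_rev] at hweight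
  rw [gromovProduct_comm] at hhalf hle
  exact halfCode_le_halfCode_inv hhalf (by rw [norm_inv_eq]; lia) hweight

theorem halfCode_inv_le_halfCode_right {l m : ι × Bool} (hlm : l.1 ≠ m.1)
    (hhalf : (f (mk [l])).norm = 2 * gromovProduct (f (mk [l]))⁻¹ (f (mk [m]))) :
    halfCode (f (mk [l]))⁻¹ ≤ halfCode (f (mk [l])) := by
  have hle := hf.two_mul_gromovProduct_le hlm
  have hweight := hf.nielsenWeight_right_le hlm
  rw [← inv_inv (f (mk [l]))] at hweight
  rw [← norm_inv_eq] at hhalf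
  simpa using halfCode_le_halfCode_inv hhalf (by lia) hweight

theorem hasUncancelledMiddles (hinj : Function.Injective f) : HasUncancelledMiddles f := by
  intro l m m' hred
  by_contra! hover
  have hlm : IsReduced [l, m] := hred.infix ⟨[], [m'], rfl⟩
  have hmm' : IsReduced [m, m'] := hred.infix ⟨[l], [], rfl⟩
  have hle {k k' : ι × Bool} (hkk' : IsReduced [k, k']) :
      2 * gromovProduct (f (mk [k]))⁻¹ (f (mk [k'])) ≤
        min (f (mk [k])).norm (f (mk [k'])).norm := by
    by_cases hfst : k.1 = k'.1
    · exact (two_mul_gromovProduct_lt_of_fst_eq hinj hkk' hfst).le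
    · exact hf.two_mul_gromovProduct_le hfst
  have hle_left := hle hlm
  have hle_right := hle hmm'
  have hne_left : l.1 ≠ m.1 := fun hfst ↦ by
    have := two_mul_gromovProduct_lt_of_fst_eq hinj hlm hfst
    lia
  have hne_right : m.1 ≠ m'.1 := fun hfst ↦ by
    have := two_mul_gromovProduct_lt_of_fst_eq hinj hmm' hfst
    lia
  have hhalf_left : (f (mk [m])).norm = 2 * gromovProduct (f (mk [l]))⁻¹ (f (mk [m])) := by lia
  have hhalf_right : (f (mk [m])).norm = 2 * gromovProduct (f (mk [m]))⁻¹ (f (mk [m'])) := by lia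
  have hcode : halfCode (f (mk [m]))⁻¹ = halfCode (f (mk [m])) :=
    (hf.halfCode_inv_le_halfCode_right hne_right hhalf_right).antisymm
      (hf.halfCode_le_halfCode_inv_left hne_left hhalf_left)
  have hone : f (mk [m]) = 1 := eq_one_of_halfCode_inv_eq (hhalf_left ▸ even_two_mul _) hcode
  exact mk_singleton_ne_one m ((map_eq_one_iff f hinj).1 hone)

end IsNielsenMinimal

end Minimal

section Transvection

variable {ι : Type*}

theorem mk_singleton (l : ι × Bool) : mk [l] = cond l.2 (of l.1) (of l.1)⁻¹ := by
  obtain ⟨i, _ | _⟩ := l <;> rfl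

theorem exists_isOfFinOrder_eq_lift {f : ι → FreeGroup ι} (hf : ∀ i, lift f (f i) = of i) :
    ∃ γ : MulAut (FreeGroup ι), IsOfFinOrder γ ∧ ∀ w, γ w = lift f w := by
  have hcomp : (lift f).comp (lift f) = MonoidHom.id _ := by
    ext i
    simp [hf]
  refine ⟨(lift f).toMulEquiv (lift f) hcomp hcomp, ?_, fun _ ↦ rfl⟩
  refine isOfFinOrder_iff_pow_eq_one.2 ⟨2, two_pos, ?_⟩
  ext w
  exact DFunLike.congr_fun hcomp w

theorem exists_transvection_mem_closure {l m : ι × Bool} (hlm : l.1 ≠ m.1) :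
    ∃ τ ∈ Subgroup.closure {γ : MulAut (FreeGroup ι) | IsOfFinOrder γ},
      τ (mk [l]) = mk [l] * mk [m] ∧ ∀ i, i ≠ l.1 → τ (of i) = of i := by
  classical
  let invert : ι → FreeGroup ι := Function.update of m.1 (of m.1)⁻¹
  let reflect : ι → FreeGroup ι :=
    Function.update invert l.1 (cond l.2 (mk [l] * mk [m]) (mk [l] * mk [m])⁻¹)
  have hinvert : ∀ i, lift invert (invert i) = of i := fun i ↦ by
    by_cases him : i = m.1 <;> simp [invert, him]
  have hreflect_l : lift reflect (mk [l]) = mk [l] * mk [m] := by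
    cases hl : l.2 <;> simp [mk_singleton l, reflect, hl]
  have hreflect_m : lift reflect (mk [m]) = (mk [m])⁻¹ := by
    cases hm : m.2 <;> simp [mk_singleton m, reflect, invert, hm, hlm.symm]
  have hreflect_sq : lift reflect (lift reflect (mk [l])) = mk [l] := by
    rw [hreflect_l, map_mul, hreflect_l, hreflect_m, mul_inv_cancel_right]
  have hreflect : ∀ i, lift reflect (reflect i) = of i := fun i ↦ by
    by_cases hil : i = l.1
    · subst hil
      cases hl : l.2 <;> simpa [mk_singleton l, hl] using hreflect_sq
    · by_cases him : i = m.1 <;> simp [reflect, invert, him, hil, hlm.symm]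
  obtain ⟨β, hβ, hβ_apply⟩ := exists_isOfFinOrder_eq_lift hinvert
  obtain ⟨ε, hε, hε_apply⟩ := exists_isOfFinOrder_eq_lift hreflect
  refine ⟨ε * β, mul_mem (Subgroup.subset_closure hε) (Subgroup.subset_closure hβ), ?_, ?_⟩
  · have hinvert_l : lift invert (mk [l]) = mk [l] := by
      cases hl : l.2 <;> simp [mk_singleton l, invert, hl, hlm]
    rw [MulAut.mul_apply, hβ_apply, hε_apply, hinvert_l, hreflect_l]
  · intro i hil
    rw [MulAut.mul_apply, hβ_apply, hε_apply]
    by_cases him : i = m.1 <;> simp [reflect, invert, him, hil, hlm.symm]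

variable [Fintype ι]

theorem sum_map_of_add_map_mk_singleton {G M : Type*} [Group G] [AddCommMonoid M] {F : G → M}
    (hF : ∀ g, F g⁻¹ = F g) {f f' : FreeGroup ι →* G} {l : ι × Bool}
    (hff' : ∀ i, i ≠ l.1 → f (of i) = f' (of i)) :
    ∑ i, F (f (of i)) + F (f' (mk [l])) = ∑ i, F (f' (of i)) + F (f (mk [l])) := by
  classical
  have hletter (f : FreeGroup ι →* G) : F (f (mk [l])) = F (f (of l.1)) := by
    cases hl : l.2 <;> simp [mk_singleton l, hl, hF]
  have hrest : ∑ i ∈ {l.1}ᶜ, F (f (of i)) = ∑ i ∈ {l.1}ᶜ, F (f' (of i)) :=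
    Finset.sum_congr rfl fun i hi ↦ by rw [hff' i (by simpa using hi)]
  rw [hletter f, hletter f', Fintype.sum_eq_add_sum_compl l.1, Fintype.sum_eq_add_sum_compl l.1,
    hrest, add_right_comm, add_comm (F _), add_right_comm]

end Transvection

section Torsion

variable {α : Type*} [Finite α]

theorem exists_isNielsenMinimal [DecidableEq α] {ι : Type*} [Finite ι]
    (f : FreeGroup ι →* FreeGroup α) :
    ∃ ν ∈ Subgroup.closure {γ : MulAut (FreeGroup ι) | IsOfFinOrder γ},
      IsNielsenMinimal (f.comp ν.toMonoidHom) := by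
  have := Fintype.ofFinite ι
  obtain ⟨ν, hν, hmin⟩ := exists_minimalFor_of_wellFoundedLT
    (· ∈ Subgroup.closure {γ : MulAut (FreeGroup ι) | IsOfFinOrder γ})
    (fun ν ↦ ∑ i, nielsenWeight (f (ν (of i)))) ⟨1, one_mem _⟩
  refine ⟨ν, hν, fun l m hlm ↦ ?_⟩
  obtain ⟨τ, hτ, hτl, hτi⟩ := exists_transvection_mem_closure hlm
  have hle : ∑ i, nielsenWeight (f (ν (of i))) ≤ ∑ i, nielsenWeight (f (ν (τ (of i)))) :=
    le_of_not_gt fun hlt ↦ hlt.not_ge (hmin (mul_mem hν hτ) hlt.le)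
  have hsum : ∑ i, nielsenWeight (f (ν (of i))) + nielsenWeight (f (ν (τ (mk [l])))) =
      ∑ i, nielsenWeight (f (ν (τ (of i)))) + nielsenWeight (f (ν (mk [l]))) :=
    sum_map_of_add_map_mk_singleton nielsenWeight_inv (f := f.comp ν.toMonoidHom)
      (f' := f.comp (ν * τ).toMonoidHom) fun i hi ↦ congrArg (fun w ↦ f (ν w)) (hτi i hi).symm
  rw [hτl, map_mul, map_mul] at hsum
  exact le_of_add_le_add_left (hsum ▸ add_le_add_left hle _)

theorem finite_setOf_norm_le [DecidableEq α] (n : ℕ) : {w : FreeGroup α | w.norm ≤ n}.Finite :=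
  (List.finite_length_le (α × Bool) n).preimage toWord_injective.injOn

theorem isOfFinOrder_of_norm_map_le [DecidableEq α] {γ : MulAut (FreeGroup α)}
    (hγ : ∀ w, (γ w).norm ≤ w.norm) : IsOfFinOrder γ := by
  have hpow (k : ℕ) (w : FreeGroup α) : ((γ ^ k) w).norm ≤ w.norm := by
    induction k with
    | zero => rfl
    | succ k ih => exact pow_succ' γ k ▸ (hγ _).trans ih
  have hmaps : Set.MapsTo (fun (δ : MulAut (FreeGroup α)) i ↦ δ (of i)) (Submonoid.powers γ)
      (Set.pi Set.univ fun _ ↦ {w | w.norm ≤ 1}) := by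
    rintro _ ⟨k, rfl⟩ i -
    exact (hpow k (of i)).trans_eq (norm_of i)
  have hinj : Function.Injective fun (δ : MulAut (FreeGroup α)) i ↦ δ (of i) := fun δ ε hδε ↦
    MulEquiv.toMonoidHom_injective (FreeGroup.ext_hom _ _ (congrFun hδε))
  rw [← finite_powers]
  exact Set.Finite.of_injOn hmaps hinj.injOn (Set.Finite.pi fun _ ↦ finite_setOf_norm_le 1)

theorem closure_isOfFinOrder_eq_top :
    Subgroup.closure {γ : MulAut (FreeGroup α) | IsOfFinOrder γ} = ⊤ := by
  classical
  refine (Subgroup.eq_top_iff' _).2 fun β ↦ ?_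
  obtain ⟨ν, hν, hmin⟩ := exists_isNielsenMinimal β.toMonoidHom
  have hmid := hmin.hasUncancelledMiddles (β.injective.comp ν.injective)
  have hfin : IsOfFinOrder (β * ν)⁻¹ := isOfFinOrder_of_norm_map_le fun w ↦ by
    simpa using hmid.norm_le_norm_map ((β * ν)⁻¹ w)
  have hβν : β * ν ∈ Subgroup.closure {γ | IsOfFinOrder γ} :=
    Subgroup.subset_closure (isOfFinOrder_inv_iff.1 hfin)
  exact (Subgroup.mul_mem_cancel_right _ hν).1 hβν

end Torsion

end NielsenReduction

theorem eq_one_of_isOfFinOrder_of_monotone {X : Type*} [LinearOrder X] {f : Equiv.Perm X}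
    (hf : Monotone f) (hfin : IsOfFinOrder f) : f = 1 := by
  obtain ⟨k, hk, hfk⟩ := isOfFinOrder_iff_pow_eq_one.1 hfin
  ext x
  refine ((Function.Commute.id_right (f := f)).iterate_pos_eq_iff_map_eq hf strictMono_id hk).1 ?_
  rw [Function.iterate_id, ← Equiv.Perm.coe_pow, hfk, Equiv.Perm.coe_one]

theorem IsDiffI.monotone {f : Equiv.Perm ℝ} (hf : IsDiffI f) : Monotone f := by
  obtain ⟨hid, hC2, hderiv⟩ := hf
  have hmono : StrictMonoOn f (Set.Icc 0 1) :=
    strictMonoOn_of_deriv_pos (convex_Icc 0 1) hC2.continuousOn fun x hx ↦ by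
      rw [← derivWithin_of_mem_nhds (mem_interior_iff_mem_nhds.1 hx)]
      exact hderiv x (interior_subset hx)
  have hmaps : ∀ x ∈ Set.Icc (0 : ℝ) 1, f x ∈ Set.Icc (0 : ℝ) 1 := fun x hx ↦ by
    by_contra hfx
    exact hfx ((f.injective (hid _ hfx)).symm ▸ hx)
  intro x y hxy
  by_cases hx : x ∈ Set.Icc (0 : ℝ) 1 <;> by_cases hy : y ∈ Set.Icc (0 : ℝ) 1
  · exact hmono.monotoneOn hx hy hxy
  · grind
  · grind
  · rwa [hid x hx, hid y hy]

theorem aut_freeGroup_action_on_interval_trivial_general {α X : Type*} [Finite α] [LinearOrder X]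
    (φ : MulAut (FreeGroup α) →* Equiv.Perm X) (hφ : ∀ g, Monotone (φ g)) :
    ∀ g, φ g = 1 := by
  have htorsion : Set.EqOn φ (1 : MulAut (FreeGroup α) →* Equiv.Perm X) {γ | IsOfFinOrder γ} :=
    fun γ hγ ↦ eq_one_of_isOfFinOrder_of_monotone (hφ γ) (φ.isOfFinOrder hγ)
  exact DFunLike.congr_fun <|
    MonoidHom.eq_of_eqOn_dense NielsenReduction.closure_isOfFinOrder_eq_top htorsion

/-- **Actions of `Aut(Fₙ)` on the interval are trivial.** For `n ≥ 6`, any group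
homomorphism from `Aut(Fₙ)` to `Diff²₊(I)` (realized as a homomorphism into the
permutations of `ℝ` all of whose values are C² diffeomorphisms of `[0,1]`) sends
every automorphism to the identity. -/
theorem aut_freeGroup_action_on_interval_trivial (n : ℕ) (hn : 6 ≤ n)
    (φ : MulAut (FreeGroup (Fin n)) →* Equiv.Perm ℝ)
    (hφ : ∀ g, IsDiffI (φ g)) :
    ∀ g, φ g = 1 := by
  exact aut_freeGroup_action_on_interval_trivial_general φ fun g ↦ (hφ g).monotone
end
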